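/- arXiv:2201.03487 — 2 statements merged into one kernel-verified Lean document; each statement's English description precedes it below -/
import Mathlib

section
/- For every κ > 0 there exists C > 0 with the following property. For every x ∈ ℝ³, every v,w ∈ ℝ³ with ‖v‖,‖w‖ ≤ 1/4, and every t ∈ (0,1), writing a := ‖v×w‖/2 for the area of the triangle P = (x,v,w) and c(k) := a ∫₀¹ ∫₀^{1−s} exp(−2πi⟨k, x+sv+τw⟩) dτ ds ∈ ℂ for k ∈ ℤ³, one has ∑_{k∈ℤ³} (1+‖k‖²)^{κ} e^{−t‖k‖²} |c(k)|² ≤ C a t^{−1/2−κ}. -/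
noncomputable section
open scoped ENNReal

/-- `kn2 k = ‖k‖²` for `k ∈ ℤ³`. -/
def kn2 (k : Fin 3 → ℤ) : ℝ := ∑ i, ((k i : ℝ)) ^ 2

/-- The cross product of two vectors in `ℝ³`. -/
def cross (v w : EuclideanSpace ℝ (Fin 3)) : EuclideanSpace ℝ (Fin 3) :=
  (WithLp.equiv 2 (Fin 3 → ℝ)).symm
    ![v 1 * w 2 - v 2 * w 1, v 2 * w 0 - v 0 * w 2, v 0 * w 1 - v 1 * w 0]

/-- The area `‖v × w‖ / 2` of the triangle `P = (x, v, w)`. -/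
def triArea (v w : EuclideanSpace ℝ (Fin 3)) : ℝ := ‖cross v w‖ / 2

/-- The `k`-th Fourier coefficient of the surface-integration measure `δ_P` on the torus
along the filled triangle `P = (x, v, w)`:
`c(k) = |P| ∫₀¹ ∫₀^{1−s} exp(−2πi⟨k, x+sv+τw⟩) dτ ds`. -/
def triCoef (x v w : EuclideanSpace ℝ (Fin 3)) (k : Fin 3 → ℤ) : ℂ :=
  (triArea v w : ℂ) * ∫ s in (0:ℝ)..1, ∫ τ in (0:ℝ)..(1 - s),
    Complex.exp (-2 * (Real.pi : ℂ) * Complex.I *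
      (((∑ i, (k i : ℝ) * (x i + s * v i + τ * w i) : ℝ)) : ℂ))

open MeasureTheory

lemma aux_sum_exp {b : ℝ} (hb : 0 < b) : Summable fun n : ℤ => Real.exp (-(b * |(n:ℝ)|)) := by
  have h : Summable fun n : ℕ => Real.exp ((n:ℝ) * (-b)) :=
    Real.summable_exp_nat_mul_iff.mpr (by linarith)
  apply Summable.of_nat_of_neg
  · refine h.congr fun n => ?_
    simp; ring
  · refine h.congr fun n => ?_
    simp; ring

lemma aux_int_sq (n : ℤ) : |(n:ℝ)| ≤ (n:ℝ)^2 := by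
  have : |n| ≤ n^2 := by
    rw [← sq_abs]; nlinarith [abs_nonneg n, Int.le_self_sq |n|]
  exact_mod_cast this

lemma aux_sum_sq {b : ℝ} (hb : 0 < b) : Summable fun n : ℤ => Real.exp (-(b * (n:ℝ)^2)) := by
  refine Summable.of_nonneg_of_le (fun n => (Real.exp_pos _).le) (fun n => ?_) (aux_sum_exp hb)
  apply Real.exp_le_exp.mpr
  have := aux_int_sq n
  nlinarith

lemma aux_prod_tsum : ∀ (N : ℕ) (f : Fin N → ℤ → ℂ), (∀ i, Summable fun n => ‖f i n‖) →
    (Summable fun k : Fin N → ℤ => ‖∏ i, f i (k i)‖) ∧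
      ∑' k : Fin N → ℤ, ∏ i, f i (k i) = ∏ i, ∑' n, f i n := by
  intro N
  induction N with
  | zero =>
    intro f _
    refine ⟨Summable.of_finite, ?_⟩
    simp
  | succ N ih =>
    intro f hf
    obtain ⟨h1, h2⟩ := ih (fun i => f i.succ) (fun i => hf _)
    have hs := (hf 0).mul_norm h1
    have ht := tsum_mul_tsum_of_summable_norm (hf 0) h1
    let e := Fin.consEquiv (fun _ : Fin (N+1) => ℤ)
    constructor
    · rw [← e.summable_iff]
      refine hs.congr fun z => ?_
      simp [e, Fin.prod_univ_succ, Fin.consEquiv]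
    · rw [Fin.prod_univ_succ, ← h2, ht, ← e.tsum_eq]
      refine tsum_congr fun z => ?_
      simp [e, Fin.prod_univ_succ, Fin.consEquiv]

lemma aux_theta : ∃ M : ℝ, 0 < M ∧ ∀ (t z : ℝ), t ∈ Set.Ioo (0:ℝ) 1 → |z| ≤ 1/2 →
    ‖∑' n : ℤ, Complex.exp (-((t/2 : ℝ) : ℂ) * (n:ℂ)^2 + 2 * Real.pi * (Complex.I * ((-z : ℝ):ℂ)) * n)‖
      ≤ M * t ^ (-(1:ℝ)/2) * Real.exp (-(2 * Real.pi^2 / t) * z^2) := by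
  have hS := (aux_sum_exp one_pos).mul_left (Real.exp 1)
  have hpi := Real.pi_gt_three
  refine ⟨(2 * Real.pi) ^ ((1:ℝ)/2) * ∑' n : ℤ, Real.exp 1 * Real.exp (-(1 * |(n:ℝ)|)), ?_, ?_⟩
  · apply mul_pos (by positivity)
    exact hS.tsum_pos (fun n => by positivity) 0 (by positivity)
  rintro t z ⟨ht0, ht1⟩ hz
  set a : ℝ := t / (2 * Real.pi) with ha
  have ha0 : 0 < a := by positivity
  have key := Complex.tsum_exp_neg_quadratic (a := (a : ℂ)) (by simpa using ha0)
    (Complex.I * ((-z : ℝ):ℂ))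
  have e1 : (-((t/2 : ℝ) : ℂ)) = -(Real.pi : ℂ) * (a:ℂ) := by
    rw [← Complex.ofReal_neg, ← Complex.ofReal_neg, ← Complex.ofReal_mul]
    congr 1
    rw [ha]; field_simp
  rw [e1, key, norm_mul]
  have hterm : ∀ n : ℤ, ‖Complex.exp (-(Real.pi:ℂ) / a * (n + Complex.I * (Complex.I * ((-z : ℝ):ℂ)))^2)‖
      ≤ Real.exp (-(2 * Real.pi^2 / t) * z^2) * (Real.exp 1 * Real.exp (-(1 * |(n:ℝ)|))) := by
    intro n
    have : -(Real.pi:ℂ) / a * (n + Complex.I * (Complex.I * ((-z : ℝ):ℂ)))^2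
        = ((-(2 * Real.pi^2 / t) * (n + z)^2 : ℝ) : ℂ) := by
      have e2 : (n + Complex.I * (Complex.I * ((-z : ℝ):ℂ))) = (n:ℂ) + z := by
        rw [← mul_assoc, Complex.I_mul_I]; push_cast; ring
      rw [e2, ha]
      have : (t:ℂ) ≠ 0 := by exact_mod_cast ht0.ne'
      have : (Real.pi:ℂ) ≠ 0 := by exact_mod_cast Real.pi_pos.ne'
      push_cast
      field_simp
    rw [this, Complex.norm_exp_ofReal, ← Real.exp_add, ← Real.exp_add, Real.exp_le_exp]
    have h1 : 1 ≤ 2 * Real.pi^2 / t := by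
      rw [le_div_iff₀ ht0]; nlinarith
    generalize 2 * Real.pi^2 / t = c at h1
    have h2 := aux_int_sq n
    have h3 : -(|(n:ℝ)|) ≤ 2 * (n * z) := by
      have : |(n:ℝ) * z| ≤ |(n:ℝ)| * (1/2) := by
        rw [abs_mul]; gcongr
      have := neg_abs_le ((n:ℝ) * z)
      linarith
    have h4 : |(n:ℝ)| - 1 ≤ (n:ℝ)^2 - |(n:ℝ)| := by
      nlinarith [sq_abs (n:ℝ), sq_nonneg (|(n:ℝ)| - 1)]
    have h5 : (n:ℝ)^2 - |(n:ℝ)| ≤ c * ((n:ℝ)^2 - |(n:ℝ)|) := by nlinarith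
    nlinarith
  have hS2 := hS.mul_left (Real.exp (-(2 * Real.pi^2 / t) * z^2))
  have hb := tsum_of_norm_bounded hS2.hasSum hterm
  rw [tsum_mul_left] at hb
  have hn : ‖1 / (a:ℂ) ^ ((1:ℂ)/2)‖ = (2 * Real.pi) ^ ((1:ℝ)/2) * t ^ (-(1:ℝ)/2) := by
    have : ((1:ℂ)/2) = (((1:ℝ)/2 : ℝ) : ℂ) := by push_cast; rfl
    rw [this, ← Complex.ofReal_cpow ha0.le, norm_div, Complex.norm_real, norm_one,
      Real.norm_of_nonneg (by positivity), ha, Real.div_rpow ht0.le (by positivity), neg_div,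
      Real.rpow_neg ht0.le]
    field_simp
  rw [hn]
  exact (mul_le_mul_of_nonneg_left hb (by positivity)).trans_eq (by ring)

lemma aux_gauss1 {b : ℝ} (hb : 0 < b) (r : ℝ) :
    ∫⁻ τ : ℝ, ENNReal.ofReal (Real.exp (-b * (τ + r)^2)) = ENNReal.ofReal (√(Real.pi / b)) := by
  rw [lintegral_add_right_eq_self (fun τ : ℝ => ENNReal.ofReal (Real.exp (-b * τ^2))) r,
    ← ofReal_integral_eq_lintegral_ofReal (integrable_exp_neg_mul_sq hb)
      (Filter.Eventually.of_forall fun _ => (Real.exp_pos _).le), integral_gaussian]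

lemma aux_weight {κ : ℝ} (hκ : 0 < κ) : ∃ C : ℝ, 0 < C ∧ ∀ t y : ℝ, t ∈ Set.Ioo (0:ℝ) 1 → 0 ≤ y →
    (1 + y) ^ κ * Real.exp (-t * y) ≤ C * t ^ (-κ) * Real.exp (-(t/2) * y) := by
  refine ⟨(2*κ)^κ * Real.exp (1/2), by positivity, ?_⟩
  rintro t y ⟨h0, h1⟩ hy
  have ha : 1 + y ≤ t⁻¹ * (1 + t * y) := by
    rw [mul_add, ← mul_assoc, inv_mul_cancel₀ h0.ne']
    have := (one_le_inv₀ h0).mpr h1.le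
    linarith
  have hb : 1 + t * y ≤ (2*κ) * Real.exp ((1 + t*y)/(2*κ)) := by
    have := Real.add_one_le_exp ((1 + t*y)/(2*κ))
    have h2 : (1 + t*y)/(2*κ) ≤ Real.exp ((1 + t*y)/(2*κ)) := by linarith
    rwa [div_le_iff₀' (by positivity)] at h2
  have hty : 0 ≤ t * y := by positivity
  have hc : (1 + y) ^ κ ≤ t ^ (-κ) * ((2*κ)^κ * Real.exp ((1 + t*y)/2)) := by
    calc (1+y)^κ ≤ (t⁻¹ * ((2*κ) * Real.exp ((1 + t*y)/(2*κ))))^κ := by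
          apply Real.rpow_le_rpow (by linarith) _ hκ.le
          exact ha.trans (by gcongr)
      _ = _ := by
          rw [Real.mul_rpow (by positivity) (by positivity), Real.mul_rpow (by positivity) (by positivity),
            Real.inv_rpow h0.le, Real.rpow_neg h0.le, ← Real.exp_mul]
          congr 3
          field_simp
  calc _ ≤ t ^ (-κ) * ((2*κ)^κ * Real.exp ((1 + t*y)/2)) * Real.exp (-t * y) := by gcongr
    _ = (2*κ)^κ * t ^ (-κ) * (Real.exp ((1 + t*y)/2) * Real.exp (-t * y)) := by ring
    _ = (2*κ)^κ * t ^ (-κ) * (Real.exp (1/2) * Real.exp (-(t/2) * y)) := by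
      rw [← Real.exp_add, ← Real.exp_add]; ring_nf
    _ = _ := by ring

def auxT : Set (ℝ × ℝ) := {p | p.1 ∈ Set.Ioc (0:ℝ) 1 ∧ p.2 ∈ Set.Ioc (0:ℝ) (1 - p.1)}

lemma auxT_sub : auxT ⊆ Set.Ioc (0:ℝ) 1 ×ˢ Set.Ioc (0:ℝ) 1 := by
  rintro ⟨s, τ⟩ ⟨h1, h2⟩
  simp only [Set.mem_Ioc] at h1 h2
  simp only [Set.mem_prod, Set.mem_Ioc]
  refine ⟨h1, h2.1, by linarith⟩

lemma auxT_meas : MeasurableSet auxT := by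
  have h1 : MeasurableSet {p : ℝ × ℝ | 0 < p.1} := measurableSet_lt measurable_const measurable_fst
  have h2 : MeasurableSet {p : ℝ × ℝ | p.1 ≤ 1} := measurableSet_le measurable_fst measurable_const
  have h3 : MeasurableSet {p : ℝ × ℝ | 0 < p.2} := measurableSet_lt measurable_const measurable_snd
  have h4 : MeasurableSet {p : ℝ × ℝ | p.2 ≤ 1 - p.1} :=
    measurableSet_le measurable_snd (measurable_const.sub measurable_fst)
  exact (h1.inter h2).inter (h3.inter h4)

lemma auxT_vol : (volume : Measure (ℝ × ℝ)) auxT ≤ 1 := by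
  refine (measure_mono auxT_sub).trans ?_
  rw [Measure.volume_eq_prod, Measure.prod_prod]
  simp

lemma auxT_integral (f : ℝ × ℝ → ℂ) (hf : Continuous f) :
    ∫ s in (0:ℝ)..1, ∫ τ in (0:ℝ)..(1 - s), f (s, τ) = ∫ p in auxT, f p := by
  have hint : IntegrableOn f auxT := by
    apply IntegrableOn.mono_set (t := Set.Icc (0:ℝ) 1 ×ˢ Set.Icc (0:ℝ) 1)
    · exact hf.continuousOn.integrableOn_compact (isCompact_Icc.prod isCompact_Icc)
    · exact auxT_sub.trans (Set.prod_mono Set.Ioc_subset_Icc_self Set.Ioc_subset_Icc_self)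
  rw [← integral_indicator auxT_meas, Measure.volume_eq_prod, integral_prod]
  · rw [intervalIntegral.integral_of_le zero_le_one, ← integral_indicator measurableSet_Ioc]
    congr 1
    ext s
    by_cases hs : s ∈ Set.Ioc (0:ℝ) 1
    · rw [Set.indicator_of_mem hs, intervalIntegral.integral_of_le (by linarith [hs.2]),
        ← integral_indicator measurableSet_Ioc]
      congr 1
      ext τ
      by_cases hτ : τ ∈ Set.Ioc (0:ℝ) (1 - s)
      · rw [Set.indicator_of_mem hτ, Set.indicator_of_mem]
        exact ⟨hs, hτ⟩
      · rw [Set.indicator_of_notMem hτ, Set.indicator_of_notMem]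
        exact fun h => hτ h.2
    · rw [Set.indicator_of_notMem hs]
      symm
      convert integral_zero ℝ ℂ with τ
      rw [Set.indicator_of_notMem]
      exact fun h => hs h.1
  · rw [← Measure.volume_eq_prod, integrable_indicator_iff auxT_meas]
    exact hint

def auxE (k : Fin 3 → ℤ) (z : Fin 3 → ℝ) : ℂ :=
  Complex.exp (-2 * (Real.pi : ℂ) * Complex.I * (((∑ i, (k i : ℝ) * z i : ℝ)) : ℂ))

lemma auxE_eq (k : Fin 3 → ℤ) (z : Fin 3 → ℝ) :
    auxE k z = Complex.exp ((-2 * Real.pi * (∑ i, (k i : ℝ) * z i) : ℝ) * Complex.I) := by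
  unfold auxE; congr 1; push_cast; ring

lemma auxE_norm (k : Fin 3 → ℤ) (z : Fin 3 → ℝ) : ‖auxE k z‖ = 1 := by
  rw [auxE_eq, Complex.norm_exp_ofReal_mul_I]

lemma auxE_mul_conj (k : Fin 3 → ℤ) (z y : Fin 3 → ℝ) :
    auxE k z * (starRingEnd ℂ) (auxE k y) = auxE k (z - y) := by
  rw [auxE_eq, auxE_eq, auxE_eq, ← Complex.exp_conj, ← Complex.exp_add]
  congr 1
  simp only [map_mul, Complex.conj_ofReal, Complex.conj_I, Pi.sub_apply, mul_sub,
    Finset.sum_sub_distrib]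
  push_cast
  ring

lemma auxE_cont (k : Fin 3 → ℤ) : Continuous (auxE k) := by
  unfold auxE; fun_prop

def auxM (t : ℝ) (k : Fin 3 → ℤ) : ℝ := Real.exp (-(t/2) * kn2 k)

def auxθ (t z : ℝ) (n : ℤ) : ℂ :=
  Complex.exp (-((t/2 : ℝ) : ℂ) * (n:ℂ)^2 + 2 * Real.pi * (Complex.I * ((-z : ℝ):ℂ)) * n)

lemma auxθ_norm (t z : ℝ) (n : ℤ) : ‖auxθ t z n‖ = Real.exp (-(t/2 * (n:ℝ)^2)) := by
  unfold auxθ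
  rw [Complex.norm_exp]
  congr 1
  have h : (-((t/2 : ℝ) : ℂ) * (n:ℂ)^2 + 2 * Real.pi * (Complex.I * ((-z : ℝ):ℂ)) * n)
    = ((-(t/2 * (n:ℝ)^2) : ℝ) : ℂ) + ((2 * Real.pi * (-z) * n : ℝ) : ℂ) * Complex.I := by
    push_cast; ring
  rw [h, Complex.add_re, Complex.ofReal_re, Complex.re_ofReal_mul]
  simp

lemma auxθ_prod (t : ℝ) (z : Fin 3 → ℝ) (k : Fin 3 → ℤ) :
    (auxM t k : ℂ) * auxE k z = ∏ i, auxθ t (z i) (k i) := by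
  unfold auxM auxE auxθ kn2
  rw [← Complex.exp_sum, Complex.ofReal_exp, ← Complex.exp_add]
  congr 1
  simp only [Fin.sum_univ_three]
  push_cast
  ring

lemma auxM_summable {t : ℝ} (ht : 0 < t) : Summable (auxM t) := by
  have := (aux_prod_tsum 3 (fun _ => auxθ t 0) (fun i => by
    simp only [auxθ_norm]; exact aux_sum_sq (half_pos ht))).1
  refine this.congr fun k => ?_
  have h := auxθ_prod t 0 k
  simp only [Pi.zero_apply] at h
  rw [← h, norm_mul, auxE_norm, mul_one, Complex.norm_real, Real.norm_of_nonneg]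
  exact (Real.exp_pos _).le

lemma auxK_bound : ∃ M : ℝ, 0 < M ∧ ∀ (t : ℝ) (z : Fin 3 → ℝ), t ∈ Set.Ioo (0:ℝ) 1 →
    (∀ i, |z i| ≤ 1/2) →
    ‖∑' k : Fin 3 → ℤ, (auxM t k : ℂ) * auxE k z‖
      ≤ M * t ^ (-(3:ℝ)/2) * Real.exp (-(2 * Real.pi^2 / t) * ∑ i, z i^2) := by
  obtain ⟨M, hM, h⟩ := aux_theta
  refine ⟨M^3, by positivity, ?_⟩
  intro t z ht hz
  have h2 := (aux_prod_tsum 3 (fun i => auxθ t (z i)) (fun i => by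
    simp only [auxθ_norm]; exact aux_sum_sq (half_pos ht.1))).2
  simp only [auxθ_prod]
  rw [h2, norm_prod]
  have ht0 := ht.1
  calc _ ≤ ∏ i, (M * t ^ (-(1:ℝ)/2) * Real.exp (-(2 * Real.pi^2 / t) * z i^2)) :=
        Finset.prod_le_prod (fun _ _ => norm_nonneg _) (fun i _ => h t (z i) ht (hz i))
    _ = _ := by
        rw [Finset.prod_mul_distrib, ← Real.exp_sum, Finset.prod_const, Finset.mul_sum, mul_pow,
          ← Real.rpow_mul_natCast ht0.le]
        norm_num

lemma aux_swap {X : Type*} [MeasurableSpace X] (μ : Measure X) [IsFiniteMeasure μ]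
    (φ : X → Fin 3 → ℝ) (hφ : Measurable φ) {t : ℝ} (ht : 0 < t) :
    ∑' k : Fin 3 → ℤ, ENNReal.ofReal (auxM t k * ‖∫ p, auxE k (φ p) ∂μ‖^2)
      ≤ ∫⁻ z : X × X, ‖∑' k : Fin 3 → ℤ, (auxM t k : ℂ) * auxE k (φ z.1 - φ z.2)‖ₑ ∂(μ.prod μ) := by
  let F : (Fin 3 → ℤ) → X × X → ℂ := fun k z => (auxM t k : ℂ) * auxE k (φ z.1 - φ z.2)
  have hMpos : ∀ k, 0 ≤ auxM t k := fun k => (Real.exp_pos _).le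
  have hFn : ∀ k z, ‖F k z‖ = auxM t k := fun k z => by
    simp only [F]
    rw [norm_mul, auxE_norm, mul_one, Complex.norm_real, Real.norm_of_nonneg (hMpos k)]
  have hFm : ∀ k, Measurable (F k) := fun k => by
    have := (auxE_cont k).measurable
    exact measurable_const.mul (this.comp
      ((hφ.comp measurable_fst).sub (hφ.comp measurable_snd)))
  have hFi : ∀ k, Integrable (F k) (μ.prod μ) := fun k =>
    Integrable.of_bound (hFm k).aestronglyMeasurable (auxM t k)
      (Filter.Eventually.of_forall fun z => (hFn k z).le)
  have hsum : Summable fun k => ∫ z, ‖F k z‖ ∂(μ.prod μ) := by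
    simp only [hFn, integral_const, smul_eq_mul]
    exact (auxM_summable ht).mul_left _
  have hS := hasSum_integral_of_summable_integral_norm hFi hsum
  have hval : ∀ k, ∫ z, F k z ∂(μ.prod μ) = ((auxM t k * ‖∫ p, auxE k (φ p) ∂μ‖^2 : ℝ) : ℂ) := by
    intro k
    simp only [F, ← auxE_mul_conj]
    rw [integral_const_mul, integral_prod_mul (fun p => auxE k (φ p))
      (fun q => (starRingEnd ℂ) (auxE k (φ q))), integral_conj, Complex.mul_conj,
      Complex.normSq_eq_norm_sq]
    push_cast; rfl
  simp only [hval] at hS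
  have hS' : Summable fun k => auxM t k * ‖∫ p, auxE k (φ p) ∂μ‖^2 := by
    exact_mod_cast hS.summable
  have hnn : ∀ k, 0 ≤ auxM t k * ‖∫ p, auxE k (φ p) ∂μ‖^2 := fun k =>
    mul_nonneg (hMpos k) (sq_nonneg _)
  rw [← ENNReal.ofReal_tsum_of_nonneg hnn hS']
  have : ENNReal.ofReal (∑' k, auxM t k * ‖∫ p, auxE k (φ p) ∂μ‖^2)
      = ‖∫ z, ∑' k, F k z ∂(μ.prod μ)‖ₑ := by
    rw [← hS.tsum_eq, ← Complex.ofReal_tsum, ← ofReal_norm, Complex.norm_real,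
      Real.norm_of_nonneg (tsum_nonneg hnn)]
  rw [this]
  exact enorm_integral_le_lintegral_enorm _

lemma aux_gauss2 (v w : EuclideanSpace ℝ (Fin 3)) (hA : 0 < triArea v w) {c : ℝ} (hc : 0 < c)
    (q : ℝ × ℝ) :
    ∫⁻ p : ℝ × ℝ, ENNReal.ofReal (Real.exp (-c * ∑ i, ((p.1 - q.1) * v i + (p.2 - q.2) * w i)^2))
      = ENNReal.ofReal (Real.pi / (2 * c * triArea v w)) := by
  set A := triArea v w with hAdef
  have hcr : 4 * A^2 = (v 1 * w 2 - v 2 * w 1)^2 + (v 2 * w 0 - v 0 * w 2)^2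
      + (v 0 * w 1 - v 1 * w 0)^2 := by
    have : 4 * A^2 = ‖cross v w‖^2 := by rw [hAdef, triArea]; ring
    rw [this, EuclideanSpace.norm_sq_eq, Fin.sum_univ_three]
    simp [cross]
  set W := w 0^2 + w 1^2 + w 2^2 with hW
  set D := v 0 * w 0 + v 1 * w 1 + v 2 * w 2 with hD
  have hWpos : 0 < W := by
    have h0 : 0 ≤ W := by positivity
    rcases h0.lt_or_eq with h | h
    · exact h
    · exfalso
      have h0 : w 0 = 0 := by nlinarith [sq_nonneg (w 0), sq_nonneg (w 1), sq_nonneg (w 2)]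
      have h1 : w 1 = 0 := by nlinarith [sq_nonneg (w 0), sq_nonneg (w 1), sq_nonneg (w 2)]
      have h2 : w 2 = 0 := by nlinarith [sq_nonneg (w 0), sq_nonneg (w 1), sq_nonneg (w 2)]
      rw [h0, h1, h2] at hcr
      nlinarith
  have hq : ∀ s τ : ℝ, Real.exp (-c * ∑ i, ((s - q.1) * v i + (τ - q.2) * w i)^2)
      = Real.exp (-(c * W) * (τ + (-q.2 + (s - q.1) * D / W))^2)
        * Real.exp (-(c * (4 * A^2 / W)) * (s + (-q.1))^2) := by
    intro s τ
    rw [← Real.exp_add, Fin.sum_univ_three, hcr]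
    congr 1
    field_simp
    rw [hD, hW]
    ring
  rw [Measure.volume_eq_prod, lintegral_prod _ (by
    apply Measurable.aemeasurable
    fun_prop)]
  simp only [hq, ENNReal.ofReal_mul (Real.exp_pos _).le]
  have : ∀ s : ℝ, ∫⁻ τ : ℝ, ENNReal.ofReal (Real.exp (-(c * W) * (τ + (-q.2 + (s - q.1) * D / W))^2))
        * ENNReal.ofReal (Real.exp (-(c * (4 * A^2 / W)) * (s + (-q.1))^2))
      = ENNReal.ofReal (√(Real.pi / (c * W))) *
        ENNReal.ofReal (Real.exp (-(c * (4 * A^2 / W)) * (s + (-q.1))^2)) := by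
    intro s
    rw [lintegral_mul_const' _ _ ENNReal.ofReal_ne_top, aux_gauss1 (by positivity)]
  simp only [this]
  rw [lintegral_const_mul' _ _ ENNReal.ofReal_ne_top, aux_gauss1 (by positivity),
    ← ENNReal.ofReal_mul (Real.sqrt_nonneg _), ← Real.sqrt_mul (by positivity)]
  congr 1
  rw [Real.sqrt_eq_iff_mul_self_eq (by positivity) (by positivity)]
  field_simp
  ring

lemma aux_main0 : ∃ M : ℝ, 0 < M ∧ ∀ (x v w : EuclideanSpace ℝ (Fin 3)) (t : ℝ),
    ‖v‖ ≤ 1/4 → ‖w‖ ≤ 1/4 → t ∈ Set.Ioo (0:ℝ) 1 → 0 < triArea v w →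
    ∑' k : Fin 3 → ℤ, ENNReal.ofReal
      (auxM t k * ‖∫ p in auxT, auxE k (fun i => x i + p.1 * v i + p.2 * w i)‖^2)
      ≤ ENNReal.ofReal (M * t ^ (-(1:ℝ)/2) / triArea v w) := by
  obtain ⟨M, hM, hK⟩ := auxK_bound
  refine ⟨M * (Real.pi / (4 * Real.pi^2)), by positivity, ?_⟩
  intro x v w t hv hw ht hA
  have ht0 := ht.1
  have : IsFiniteMeasure (volume.restrict auxT) :=
    ⟨by rw [Measure.restrict_apply_univ]; exact auxT_vol.trans_lt ENNReal.one_lt_top⟩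
  set φ : ℝ × ℝ → Fin 3 → ℝ := fun p i => x i + p.1 * v i + p.2 * w i with hφ
  have hφm : Measurable φ := by
    apply Continuous.measurable
    fun_prop
  refine (aux_swap (volume.restrict auxT) φ hφm ht0).trans ?_
  set c := 2 * Real.pi^2 / t with hc
  have hc0 : 0 < c := by positivity
  set B := M * t ^ (-(3:ℝ)/2) with hB
  have hB0 : 0 ≤ B := by positivity
  let G : (ℝ × ℝ) × (ℝ × ℝ) → ENNReal := fun z =>
    ENNReal.ofReal B * ENNReal.ofReal
      (Real.exp (-c * ∑ i, ((z.2.1 - z.1.1) * v i + (z.2.2 - z.1.2) * w i)^2))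
  have step1 : ∫⁻ z, ‖∑' k : Fin 3 → ℤ, (auxM t k : ℂ) * auxE k (φ z.1 - φ z.2)‖ₑ
      ∂((volume.restrict auxT).prod (volume.restrict auxT))
      ≤ ∫⁻ z, G z ∂((volume.restrict auxT).prod (volume.restrict auxT)) := by
    rw [Measure.prod_restrict]
    apply setLIntegral_mono' (auxT_meas.prod auxT_meas)
    rintro ⟨⟨s, τ⟩, ⟨s', τ'⟩⟩ ⟨hz1, hz2⟩
    have a1 := auxT_sub hz1
    have a2 := auxT_sub hz2
    simp only [Set.mem_prod, Set.mem_Ioc] at a1 a2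
    have hd : ∀ i, (φ (s, τ) - φ (s', τ')) i = (s - s') * v i + (τ - τ') * w i := by
      intro i; simp only [hφ, Pi.sub_apply]; ring
    have hb := hK t (φ (s, τ) - φ (s', τ')) ht (by
      intro i
      rw [hd]
      have hvi : |v i| ≤ 1/4 := (PiLp.norm_apply_le v i).trans hv
      have hwi : |w i| ≤ 1/4 := (PiLp.norm_apply_le w i).trans hw
      have h1 : |s - s'| ≤ 1 := by rw [abs_le]; constructor <;> linarith
      have h2 : |τ - τ'| ≤ 1 := by rw [abs_le]; constructor <;> linarith
      calc _ ≤ |s - s'| * |v i| + |τ - τ'| * |w i| := by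
            rw [← abs_mul, ← abs_mul]; exact abs_add_le _ _
        _ ≤ 1 * (1/4) + 1 * (1/4) := by gcongr
        _ = 1/2 := by norm_num)
    simp only [G]
    rw [← ENNReal.ofReal_mul hB0, ← ofReal_norm]
    apply ENNReal.ofReal_le_ofReal
    refine hb.trans (le_of_eq ?_)
    congr 3
    refine Finset.sum_congr rfl fun i _ => ?_
    rw [hd]; ring
  refine step1.trans ?_
  rw [lintegral_prod _ (by
    apply Measurable.aemeasurable
    simp only [G]
    fun_prop)]
  have step2 : ∀ p : ℝ × ℝ, ∫⁻ q in auxT, G (p, q) ≤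
      ENNReal.ofReal (B * (Real.pi / (2 * c * triArea v w))) := by
    intro p
    refine (setLIntegral_le_lintegral _ _).trans ?_
    simp only [G]
    rw [lintegral_const_mul' _ _ ENNReal.ofReal_ne_top, aux_gauss2 v w hA hc0 p,
      ENNReal.ofReal_mul hB0]
  refine (lintegral_mono step2).trans ?_
  rw [lintegral_const, Measure.restrict_apply_univ]
  refine (mul_le_of_le_one_right zero_le auxT_vol).trans ?_
  apply ENNReal.ofReal_le_ofReal (le_of_eq ?_)
  rw [hB, hc]
  have : t ^ (-(1:ℝ)/2) = t ^ (-(3:ℝ)/2) * t := by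
    rw [← Real.rpow_add_one ht0.ne']; norm_num
  rw [this]
  field_simp
  ring

theorem stmt_3 (κ : ℝ) (hκ : 0 < κ) :
    ∃ C : ℝ, 0 < C ∧
      ∀ (x v w : EuclideanSpace ℝ (Fin 3)) (t : ℝ),
        ‖v‖ ≤ 1/4 → ‖w‖ ≤ 1/4 → t ∈ Set.Ioo (0:ℝ) 1 →
        ∑' k : Fin 3 → ℤ,
            ENNReal.ofReal
              ((1 + kn2 k) ^ κ * Real.exp (-t * kn2 k) * ‖triCoef x v w k‖ ^ 2)
          ≤ ENNReal.ofReal (C * triArea v w * t ^ (-(1:ℝ)/2 - κ)) := by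
  obtain ⟨C₁, hC₁, hw1⟩ := aux_weight hκ
  obtain ⟨M, hM, hm⟩ := aux_main0
  refine ⟨C₁ * M, by positivity, ?_⟩
  intro x v w t hv hw ht
  have ht0 := ht.1
  have hA0 : 0 ≤ triArea v w := by unfold triArea; positivity
  rcases hA0.lt_or_eq with hA | hA
  swap
  · simp [triCoef, ← hA]
  have hcoef : ∀ k, triCoef x v w k = (triArea v w : ℂ) *
      ∫ p in auxT, auxE k (fun i => x i + p.1 * v i + p.2 * w i) := by
    intro k
    rw [← auxT_integral (fun p => auxE k (fun i => x i + p.1 * v i + p.2 * w i))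
      ((auxE_cont k).comp (by fun_prop))]
    rfl
  have hD : 0 ≤ C₁ * t ^ (-κ) * triArea v w ^ 2 := by positivity
  calc _ ≤ ∑' k : Fin 3 → ℤ, ENNReal.ofReal (C₁ * t ^ (-κ) * triArea v w ^ 2) * ENNReal.ofReal
          (auxM t k * ‖∫ p in auxT, auxE k (fun i => x i + p.1 * v i + p.2 * w i)‖^2) := by
        refine ENNReal.tsum_le_tsum fun k => ?_
        rw [← ENNReal.ofReal_mul hD]
        apply ENNReal.ofReal_le_ofReal
        rw [hcoef, norm_mul, Complex.norm_real, Real.norm_of_nonneg hA0, mul_pow]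
        have hk : 0 ≤ kn2 k := by unfold kn2; positivity
        refine (mul_le_mul_of_nonneg_right (hw1 t (kn2 k) ht hk) (by positivity)).trans_eq ?_
        unfold auxM
        ring
    _ = ENNReal.ofReal (C₁ * t ^ (-κ) * triArea v w ^ 2) * (∑' k : Fin 3 → ℤ, ENNReal.ofReal
          (auxM t k * ‖∫ p in auxT, auxE k (fun i => x i + p.1 * v i + p.2 * w i)‖^2)) := ENNReal.tsum_mul_left
    _ ≤ ENNReal.ofReal (C₁ * t ^ (-κ) * triArea v w ^ 2) *
        ENNReal.ofReal (M * t ^ (-(1:ℝ)/2) / triArea v w) := by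
        gcongr
        exact hm x v w t hv hw ht hA
    _ = _ := by
        rw [← ENNReal.ofReal_mul hD, sub_eq_add_neg, Real.rpow_add ht0]
        congr 1
        field_simp
end
end

section
/- Let V be a finite-dimensional normed real vector space and let A : ℝ³ → Hom(ℝ³, V) be a bounded measurable ℤ³-periodic function (a V-valued 1-form on the torus). For s > 0 define (P_s A)(x) := ∫_{ℝ³} p_s(y) A(x−y) dy, where p_s(y) = (4πs)^{−3/2} exp(−‖y‖²/(4s)) is the heat kernel on ℝ³, and set P₀A := A. For a bounded measurable 1-form B and a segment (x,v) with ‖v‖ ≤ 1/4, let I_B(x,v) := ∫₀¹ B(x+τv)(v) dτ denote the line integral of B along the segment. Then for every α ∈ (0,1], every s ≥ 0, and every t > 0: sup{ ‖I_{P_s A}(x,v)‖/‖v‖^α : x ∈ ℝ³, 0 < ‖v‖ < t, ‖v‖ ≤ 1/4 } ≤ sup{ ‖I_A(x,v)‖/‖v‖^α : x ∈ ℝ³, 0 < ‖v‖ < t, ‖v‖ ≤ 1/4 }. -/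
noncomputable section
open MeasureTheory
open scoped ENNReal

/-- The lattice point of `ℝ³` associated to `m ∈ ℤ³`. -/
def latt3 (m : Fin 3 → ℤ) : EuclideanSpace ℝ (Fin 3) :=
  (WithLp.equiv 2 (Fin 3 → ℝ)).symm fun i => (m i : ℝ)

/-- The heat kernel `p_s(y) = (4πs)^{−3/2} exp(−‖y‖²/(4s))` on `ℝ³`. -/
def heatKer (s : ℝ) (y : EuclideanSpace ℝ (Fin 3)) : ℝ :=
  (4 * Real.pi * s) ^ (-(3 : ℝ) / 2) * Real.exp (-‖y‖ ^ 2 / (4 * s))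

variable {V : Type*} [NormedAddCommGroup V] [NormedSpace ℝ V] [FiniteDimensional ℝ V]

/-- The heat semigroup applied (componentwise) to a `V`-valued `1`-form on `ℝ³`:
`(P_s A)(x) = ∫ p_s(y) A(x−y) dy`, with `P₀ A = A`. -/
def heatSmooth (s : ℝ) (A : EuclideanSpace ℝ (Fin 3) → EuclideanSpace ℝ (Fin 3) →L[ℝ] V) :
    EuclideanSpace ℝ (Fin 3) → EuclideanSpace ℝ (Fin 3) →L[ℝ] V :=
  if s = 0 then A else fun x => ∫ y : EuclideanSpace ℝ (Fin 3), heatKer s y • A (x - y)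

/-- The line integral `I_B(x,v) = ∫₀¹ B(x+τv)(v) dτ` of a `1`-form `B` along the
segment `(x,v)`. -/
def lineInt (B : EuclideanSpace ℝ (Fin 3) → EuclideanSpace ℝ (Fin 3) →L[ℝ] V)
    (x v : EuclideanSpace ℝ (Fin 3)) : V :=
  ∫ τ in (0:ℝ)..1, B (x + τ • v) v

theorem heatKer_integral {s : ℝ} (hs : 0 < s) :
    ∫ y : EuclideanSpace ℝ (Fin 3), heatKer s y = 1 := by
  have h := GaussianFourier.integral_rexp_neg_mul_sq_norm
    (V := EuclideanSpace ℝ (Fin 3)) (b := 1 / (4 * s)) (by positivity)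
  have h2 : ∀ y : EuclideanSpace ℝ (Fin 3),
      heatKer s y = (4 * Real.pi * s) ^ (-(3 : ℝ) / 2) * Real.exp (-(1 / (4 * s)) * ‖y‖ ^ 2) := by
    intro y
    unfold heatKer
    congr 2
    ring
  simp_rw [h2]
  rw [integral_const_mul, h]
  have h3 : Real.pi / (1 / (4 * s)) = 4 * Real.pi * s := by
    field_simp
  rw [h3, ← Real.rpow_add (by positivity)]
  simp
  norm_num

theorem heatKer_integrable {s : ℝ} (hs : 0 < s) :
    Integrable (fun y : EuclideanSpace ℝ (Fin 3) => heatKer s y) := by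
  by_contra h
  have := heatKer_integral hs
  rw [integral_undef h] at this
  exact zero_ne_one this

theorem heatKer_nonneg {s : ℝ} (hs : 0 < s) (y : EuclideanSpace ℝ (Fin 3)) :
    0 ≤ heatKer s y := by
  unfold heatKer
  positivity

theorem lineInt_heatSmooth (A : EuclideanSpace ℝ (Fin 3) → EuclideanSpace ℝ (Fin 3) →L[ℝ] V)
    (hmeas : StronglyMeasurable A) {Cb : ℝ} (hbdd : ∀ x, ‖A x‖ ≤ Cb) {s : ℝ} (hs : 0 < s)
    (x v : EuclideanSpace ℝ (Fin 3)) :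
    lineInt (heatSmooth s A) x v = ∫ y, heatKer s y • lineInt A (x - y) v := by
  have h1 : ∀ z, heatSmooth s A z v
      = ∫ y : EuclideanSpace ℝ (Fin 3), heatKer s y • A (z - y) v := by
    intro z
    unfold heatSmooth
    rw [if_neg hs.ne', ContinuousLinearMap.integral_apply]
    · rfl
    · exact (heatKer_integrable hs).smul_bdd Cb
        (hmeas.comp_measurable (by fun_prop)).aestronglyMeasurable
        (ae_of_all _ fun y => hbdd _)
  unfold lineInt
  simp_rw [h1]
  rw [intervalIntegral_integral_swap]
  · refine integral_congr_ae (ae_of_all _ fun y => ?_)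
    simp only
    rw [intervalIntegral.integral_smul]
    simp_rw [add_sub_right_comm]
  · have hfin : IsFiniteMeasure ((volume : Measure ℝ).restrict (Set.uIoc 0 1)) := by
      rw [Set.uIoc_of_le zero_le_one]
      infer_instance
    refine Integrable.smul_bdd (𝕜 := ℝ)
      (φ := fun p : ℝ × EuclideanSpace ℝ (Fin 3) => heatKer s p.2)
      (f := fun p : ℝ × EuclideanSpace ℝ (Fin 3) => A (x + p.1 • v - p.2) v)
      ((heatKer_integrable hs).comp_snd _) (Cb * ‖v‖) ?_ (ae_of_all _ fun p => ?_)
    · have : StronglyMeasurable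
          fun p : ℝ × EuclideanSpace ℝ (Fin 3) => A (x + p.1 • v - p.2) :=
        hmeas.comp_measurable (by fun_prop)
      exact (((ContinuousLinearMap.apply ℝ V v).continuous).comp_stronglyMeasurable
        this).aestronglyMeasurable
    · exact (A _).le_of_opNorm_le (hbdd _) v

theorem stmt_17 (A : EuclideanSpace ℝ (Fin 3) → EuclideanSpace ℝ (Fin 3) →L[ℝ] V)
    (hmeas : StronglyMeasurable A) (hbdd : ∃ Cb : ℝ, ∀ x, ‖A x‖ ≤ Cb)
    (hper : ∀ (m : Fin 3 → ℤ) (x : EuclideanSpace ℝ (Fin 3)), A (x + latt3 m) = A x)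
    (α : ℝ) (hα : α ∈ Set.Ioc (0:ℝ) 1) (s : ℝ) (hs : 0 ≤ s) (t : ℝ) (ht : 0 < t) :
    (⨆ (x : EuclideanSpace ℝ (Fin 3)) (v : EuclideanSpace ℝ (Fin 3))
        (_ : 0 < ‖v‖) (_ : ‖v‖ < t) (_ : ‖v‖ ≤ 1/4),
          ENNReal.ofReal (‖lineInt (heatSmooth s A) x v‖ / ‖v‖ ^ α))
      ≤ ⨆ (x : EuclideanSpace ℝ (Fin 3)) (v : EuclideanSpace ℝ (Fin 3))
          (_ : 0 < ‖v‖) (_ : ‖v‖ < t) (_ : ‖v‖ ≤ 1/4),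
            ENNReal.ofReal (‖lineInt A x v‖ / ‖v‖ ^ α) := by
  obtain ⟨Cb, hCb⟩ := hbdd
  rcases hs.eq_or_lt with rfl | hs
  · simp [heatSmooth]
  set M := ⨆ (x : EuclideanSpace ℝ (Fin 3)) (v : EuclideanSpace ℝ (Fin 3))
          (_ : 0 < ‖v‖) (_ : ‖v‖ < t) (_ : ‖v‖ ≤ 1/4),
            ENNReal.ofReal (‖lineInt A x v‖ / ‖v‖ ^ α) with hM
  by_cases hT : M = ⊤
  · rw [hT]; exact le_top
  refine iSup_le fun x => iSup_le fun v => iSup_le fun h0 => iSup_le fun h1 => iSup_le fun h2 => ?_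
  have hv : 0 < ‖v‖ ^ α := Real.rpow_pos_of_pos h0 _
  have key : ∀ z, ‖lineInt A z v‖ ≤ M.toReal * ‖v‖ ^ α := by
    intro z
    have : ENNReal.ofReal (‖lineInt A z v‖ / ‖v‖ ^ α) ≤ M :=
      le_iSup_of_le z <| le_iSup_of_le v <| le_iSup_of_le h0 <| le_iSup_of_le h1 <|
        le_iSup_of_le h2 le_rfl
    rw [← div_le_iff₀ hv]
    exact (ENNReal.ofReal_le_iff_le_toReal hT).1 this
  rw [ENNReal.ofReal_le_iff_le_toReal hT, div_le_iff₀ hv, lineInt_heatSmooth A hmeas hCb hs]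
  calc ‖∫ y, heatKer s y • lineInt A (x - y) v‖
      ≤ ∫ y : EuclideanSpace ℝ (Fin 3), heatKer s y * (M.toReal * ‖v‖ ^ α) := by
        refine norm_integral_le_of_norm_le ((heatKer_integrable hs).mul_const _)
          (ae_of_all _ fun y => ?_)
        rw [norm_smul, Real.norm_of_nonneg (heatKer_nonneg hs y)]
        exact mul_le_mul_of_nonneg_left (key _) (heatKer_nonneg hs y)
    _ = M.toReal * ‖v‖ ^ α := by
        rw [integral_mul_const, heatKer_integral hs, one_mul]
end
end
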